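/- Let p be a prime, R a nontrivial commutative ring and q ∈ R with (p)_q = 0 and R q-divisible. Let A = R[x], σ(x) = qx, ∂_σ(x^n) = (n)_q x^{n−1}, and let D = D_{A,σ} be the Ore extension. Then: (a) an element Σ_k a_k∂^k of D commutes with every element of A if and only if a_k = 0 whenever p does not divide k; that is, the centralizer of A in D is the free A-module with basis (∂^{pk})_{k∈ℕ} (the polynomial subalgebra A[∂^p]); (b) the center of D is exactly the set of elements Σ_k b_k∂^{pk} with all b_k in the subring R[x^p] of R[x] (the polynomial subalgebra R[x^p][∂^p]). (Description of the centralizer of A and of the center of the ring of q-twisted differential operators via the twisted p-curvature θ ↦ ∂_σ^p.) -/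

import Mathlib

/-!
Write a typical operator as `f = Σ a_k ∂^k`. Since `(p)_q = 0`, the element `q` is a unit with
`q ^ p = 1`, and the Euclidean algorithm shows `(m)_q = 0` iff `p ∣ m` (otherwise
`(gcd m p)_q = (1)_q = 1` would vanish); by `q`-divisibility `(m)_q` is a unit when `p ∤ m`.

From `∂^k x = q^k x ∂^k + (k)_q ∂^{k-1}`, the coefficient of `∂^k` in `f x - x f` is
`(q^k - 1) x a_k + (k+1)_q a_{k+1}`. If `f` commutes with `x`, induction on `k` gives `a_k = 0` for
`p ∤ k`: in the step, either `a_k = 0` already, or `p ∣ k` and `q^k = 1`. The converse is read off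
the same formula, since an `f` commuting with `x` commutes with all polynomials in `x`.

For the center one also compares `f ∂` with `∂ f = Σ (σ(a_k) ∂^{k+1} + ∂_σ(a_k) ∂^k)`. When `f` is
supported on multiples of `p`, the two terms live in different degrees, so `f` commutes with `∂` iff
`σ(a_k) = a_k` and `∂_σ(a_k) = 0` for all `k`. As `∂_σ` multiplies the coefficient of `x^n` by
`(n)_q`, this says exactly that the `a_k` lie in `R[x^p]`.
-/

/-- The `q`-integer `(n)_q = 1 + q + ⋯ + q^{n-1}`. -/
def qInt {S : Type*} [CommRing S] (q : S) (n : ℕ) : S :=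
  ∑ i ∈ Finset.range n, q ^ i

open Polynomial

/-! ### `q`-integers -/

section QInt

variable {R : Type*} [CommRing R] {q : R} {p : ℕ}

lemma qInt_zero (q : R) : qInt q 0 = 0 := by simp [qInt]

lemma qInt_one (q : R) : qInt q 1 = 1 := by simp [qInt]

lemma qInt_succ (q : R) (n : ℕ) : qInt q (n + 1) = qInt q n + q ^ n := by
  simp [qInt, Finset.sum_range_succ]

lemma qInt_add (q : R) (m n : ℕ) : qInt q (m + n) = qInt q m + q ^ m * qInt q n := by
  simp [qInt, Finset.sum_range_add, Finset.mul_sum, pow_add]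

lemma q_pow_eq_one (hpq : qInt q p = 0) : q ^ p = 1 := by
  have h := geom_sum_mul q p
  change qInt q p * (q - 1) = _ at h
  rw [hpq, zero_mul] at h
  exact (sub_eq_zero.mp h.symm)

lemma q_pow_eq_one_of_dvd (hpq : qInt q p = 0) {k : ℕ} (hk : p ∣ k) : q ^ k = 1 := by
  obtain ⟨c, rfl⟩ := hk
  rw [pow_mul, q_pow_eq_one hpq, one_pow]

lemma qInt_eq_zero_of_dvd (hpq : qInt q p = 0) {k : ℕ} (hk : p ∣ k) : qInt q k = 0 := by
  obtain ⟨c, rfl⟩ := hk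
  induction c with
  | zero => simp [qInt]
  | succ c ih => rw [Nat.mul_succ, qInt_add, ih, hpq]; simp

/-- One step of the Euclidean algorithm is `(n)_q = (n % m)_q + q^(n % m) (m * (n / m))_q`. -/
lemma qInt_gcd_eq_zero (m n : ℕ) (hm : qInt q m = 0) (hn : qInt q n = 0) :
    qInt q (m.gcd n) = 0 := by
  induction m, n using Nat.gcd.induction with
  | H0 n => simpa using hn
  | H1 m n hpos ih =>
    rw [Nat.gcd_rec]
    refine ih ?_ hm
    have h := qInt_add q (n % m) (m * (n / m))
    rw [Nat.mod_add_div, qInt_eq_zero_of_dvd hm (dvd_mul_right _ _), hn] at h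
    simpa using h.symm

lemma qInt_ne_zero [Nontrivial R] (hp : p.Prime) (hpq : qInt q p = 0) {k : ℕ} (hk : ¬ p ∣ k) :
    qInt q k ≠ 0 := by
  intro h
  have h1 := qInt_gcd_eq_zero p k hpq h
  rw [(hp.coprime_iff_not_dvd.mpr hk), qInt_one] at h1
  exact one_ne_zero h1

end QInt

/-! ### The maps `σ` and `∂_σ` on `R[x]` -/

section Coefficients

variable {R : Type*} [CommRing R] {q : R} {p : ℕ}

lemma coeff_sigma {σ : R[X] →ₐ[R] R[X]} (hσ : σ X = C q * X) (a : R[X]) (n : ℕ) :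
    (σ a).coeff n = q ^ n * a.coeff n := by
  induction a using Polynomial.induction_on' with
  | add a b ha hb => simp [ha, hb, mul_add]
  | monomial m c =>
    rw [← C_mul_X_pow_eq_monomial, map_mul, map_pow, hσ, ← algebraMap_eq, σ.commutes,
      algebraMap_eq, mul_pow, ← C_pow, coeff_C_mul, coeff_C_mul, coeff_C_mul, coeff_X_pow]
    split_ifs with h
    · subst h; ring
    · simp

lemma coeff_D {D : R[X] →ₗ[R] R[X]} (hD : ∀ n : ℕ, D (X ^ n) = qInt q n • X ^ (n - 1))
    (a : R[X]) (n : ℕ) : (D a).coeff n = qInt q (n + 1) * a.coeff (n + 1) := by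
  induction a using Polynomial.induction_on' with
  | add a b ha hb => simp [ha, hb, mul_add]
  | monomial m c =>
    rw [← C_mul_X_pow_eq_monomial, ← smul_eq_C_mul, map_smul, hD, coeff_smul, coeff_smul,
      coeff_smul, coeff_X_pow, coeff_X_pow]
    rcases m with _ | m
    · simp [qInt_zero]
    · by_cases h : n = m
      · subst h; simp [mul_comm]
      · simp [h]

/-- `R[x^p]` consists of the polynomials supported in degrees divisible by `p`. -/
lemma mem_adjoin_X_pow_iff (hp : 0 < p) (a : R[X]) :
    a ∈ Algebra.adjoin R {(X : R[X]) ^ p} ↔ ∀ n, ¬ p ∣ n → a.coeff n = 0 := by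
  constructor
  · intro h n hn
    rw [Algebra.adjoin_singleton_eq_range_aeval] at h
    obtain ⟨g, rfl⟩ := h
    change (expand R p g).coeff n = 0
    rw [coeff_expand hp, if_neg hn]
  · intro h
    rw [a.as_sum_support_C_mul_X_pow]
    refine Subalgebra.sum_mem _ fun n _ => ?_
    by_cases hn : p ∣ n
    · obtain ⟨c, rfl⟩ := hn
      rw [← smul_eq_C_mul, pow_mul]
      exact Subalgebra.smul_mem _ (Subalgebra.pow_mem _ (Algebra.self_mem_adjoin_singleton _ _) _) _
    · simp [h n hn]

end Coefficients

/-! ### The Ore extension -/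

/-- `mul` is a multiplication on the free left `R[x]`-module with basis `∂^k = single k 1` which
makes it the Ore extension of `R[x]` for `σ` and `D`, where `σ x = q x` and `D x^n = (n)_q x^(n-1)`.
-/
structure IsOreMul {R : Type*} [CommRing R] (q : R) (σ : R[X] →ₐ[R] R[X]) (D : R[X] →ₗ[R] R[X])
    (mul : (ℕ →₀ R[X]) → (ℕ →₀ R[X]) → (ℕ →₀ R[X])) : Prop where
  sigma_X : σ X = C q * X
  D_X_pow : ∀ n : ℕ, D (X ^ n) = qInt q n • X ^ (n - 1)
  add_mul : ∀ f g h, mul (f + g) h = mul f h + mul g h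
  mul_add : ∀ f g h, mul f (g + h) = mul f g + mul f h
  assoc : ∀ f g h, mul (mul f g) h = mul f (mul g h)
  one_mul : ∀ f, mul (Finsupp.single 0 1) f = f
  smul_mul : ∀ (a : R[X]) f g, mul (a • f) g = a • mul f g
  single_mul_single : ∀ k l : ℕ,
    mul (Finsupp.single k 1) (Finsupp.single l 1) = Finsupp.single (k + l) 1
  comm : ∀ a : R[X], mul (Finsupp.single 1 1) (Finsupp.single 0 a) =
    Finsupp.single 1 (σ a) + Finsupp.single 0 (D a)

namespace IsOreMul

variable {R : Type*} [CommRing R] {q : R} {p : ℕ} {σ : R[X] →ₐ[R] R[X]} {D : R[X] →ₗ[R] R[X]}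
  {mul : (ℕ →₀ R[X]) → (ℕ →₀ R[X]) → (ℕ →₀ R[X])}

lemma zero_mul (H : IsOreMul q σ D mul) (g : ℕ →₀ R[X]) : mul 0 g = 0 := by
  simpa using H.smul_mul 0 0 g

lemma mul_zero (H : IsOreMul q σ D mul) (f : ℕ →₀ R[X]) : mul f 0 = 0 := by
  simpa using H.mul_add f 0 0

lemma coe_mul (H : IsOreMul q σ D mul) (a : R[X]) (f : ℕ →₀ R[X]) :
    mul (Finsupp.single 0 a) f = a • f := by
  have h := H.smul_mul a (Finsupp.single 0 1) f
  rwa [H.one_mul, Finsupp.smul_single, smul_eq_mul, mul_one] at h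

lemma single_mul (H : IsOreMul q σ D mul) (k : ℕ) (a : R[X]) (g : ℕ →₀ R[X]) :
    mul (Finsupp.single k a) g = a • mul (Finsupp.single k 1) g := by
  rw [← H.smul_mul, Finsupp.smul_single, smul_eq_mul, mul_one]

lemma d_mul_single (H : IsOreMul q σ D mul) (k : ℕ) (a : R[X]) :
    mul (Finsupp.single 1 1) (Finsupp.single k a) =
      Finsupp.single (k + 1) (σ a) + Finsupp.single k (D a) := by
  have h : Finsupp.single k a = mul (Finsupp.single 0 a) (Finsupp.single k 1) := by
    rw [H.coe_mul, Finsupp.smul_single, smul_eq_mul, mul_one]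
  rw [h, ← H.assoc, H.comm, H.add_mul, H.single_mul 1, H.single_mul 0, H.single_mul_single,
    H.single_mul_single]
  simp [add_comm]

lemma sigma_C (σ : R[X] →ₐ[R] R[X]) (c : R) : σ (C c) = C c := σ.commutes c

lemma D_C (H : IsOreMul q σ D mul) (c : R) : D (C c) = 0 := by
  ext n
  rw [coeff_D H.D_X_pow]
  simp

/-- `∂^k x = q^k x ∂^k + (k)_q ∂^{k-1}`; for `k = 0` the last term vanishes, as `(0)_q = 0`. -/
lemma single_mul_X (H : IsOreMul q σ D mul) (k : ℕ) :
    mul (Finsupp.single k 1) (Finsupp.single 0 X) =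
      Finsupp.single k (C (q ^ k) * X) + Finsupp.single (k - 1) (C (qInt q k)) := by
  induction k with
  | zero => simp [H.one_mul, qInt_zero]
  | succ k ih =>
    have hDX : D (C (q ^ k) * X) = C (q ^ k) := by
      have h := H.D_X_pow 1
      rw [pow_one, qInt_one, one_smul, Nat.sub_self, pow_zero] at h
      rw [← smul_eq_C_mul, map_smul, h, smul_eq_C_mul, mul_one]
    have hσX : σ (C (q ^ k) * X) = C (q ^ (k + 1)) * X := by
      rw [map_mul, sigma_C, H.sigma_X, ← mul_assoc, ← C_mul, pow_succ]
    rw [add_comm k 1, ← H.single_mul_single, H.assoc, ih, H.mul_add, H.d_mul_single,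
      H.d_mul_single, hDX, hσX, sigma_C, H.D_C, add_comm 1 k, qInt_succ]
    rcases k with _ | k
    · simp [qInt_zero]
    · simp only [Nat.add_sub_cancel, C_add, Finsupp.single_add, Finsupp.single_zero, add_zero]
      abel

lemma single_mul_C (H : IsOreMul q σ D mul) (k : ℕ) (c : R) :
    mul (Finsupp.single k 1) (Finsupp.single 0 (C c)) = Finsupp.single k (C c) := by
  induction k with
  | zero => simp [H.one_mul]
  | succ k ih =>
    rw [add_comm k 1, ← H.single_mul_single, H.assoc, ih, H.d_mul_single, sigma_C, H.D_C,
      add_comm 1 k]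
    simp

lemma mul_X_apply (H : IsOreMul q σ D mul) (f : ℕ →₀ R[X]) (k : ℕ) :
    mul f (Finsupp.single 0 X) k = C (q ^ k) * X * f k + C (qInt q (k + 1)) * f (k + 1) := by
  induction f using Finsupp.induction_linear with
  | zero => simp [H.zero_mul]
  | add f g hf hg => rw [H.add_mul, Finsupp.add_apply, hf, hg]; simp; ring
  | single m a =>
    rw [H.single_mul, H.single_mul_X]
    simp only [Finsupp.smul_apply, Finsupp.add_apply, Finsupp.single_apply, smul_eq_mul]
    rcases m with _ | m
    · by_cases h : 0 = k
      · subst h; simp [qInt_zero, mul_comm]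
      · simp [h]
    · by_cases h : m = k
      · subst h; simp [mul_comm]
      · by_cases h' : m + 1 = k
        · subst h'; simp; ring
        · simp [h, h']

lemma mul_C (H : IsOreMul q σ D mul) (f : ℕ →₀ R[X]) (c : R) :
    mul f (Finsupp.single 0 (C c)) = C c • f := by
  induction f using Finsupp.induction_linear with
  | zero => simp [H.zero_mul]
  | add f g hf hg => rw [H.add_mul, hf, hg, smul_add]
  | single m a =>
    rw [H.single_mul, H.single_mul_C, Finsupp.smul_single, Finsupp.smul_single, smul_eq_mul,
      smul_eq_mul, mul_comm]

lemma mul_d_apply_zero (H : IsOreMul q σ D mul) (f : ℕ →₀ R[X]) :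
    mul f (Finsupp.single 1 1) 0 = 0 := by
  induction f using Finsupp.induction_linear with
  | zero => simp [H.zero_mul]
  | add f g hf hg => rw [H.add_mul, Finsupp.add_apply, hf, hg, add_zero]
  | single m a => rw [H.single_mul, H.single_mul_single]; simp

lemma mul_d_apply_succ (H : IsOreMul q σ D mul) (f : ℕ →₀ R[X]) (k : ℕ) :
    mul f (Finsupp.single 1 1) (k + 1) = f k := by
  induction f using Finsupp.induction_linear with
  | zero => simp [H.zero_mul]
  | add f g hf hg => rw [H.add_mul, Finsupp.add_apply, hf, hg, Finsupp.add_apply]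
  | single m a => rw [H.single_mul, H.single_mul_single]; simp [Finsupp.single_apply]

lemma d_mul_apply_zero (H : IsOreMul q σ D mul) (f : ℕ →₀ R[X]) :
    mul (Finsupp.single 1 1) f 0 = D (f 0) := by
  induction f using Finsupp.induction_linear with
  | zero => simp [H.mul_zero]
  | add f g hf hg => rw [H.mul_add, Finsupp.add_apply, hf, hg, Finsupp.add_apply, map_add]
  | single m a =>
    rw [H.d_mul_single]
    by_cases h : m = 0 <;> simp [h]

lemma d_mul_apply_succ (H : IsOreMul q σ D mul) (f : ℕ →₀ R[X]) (k : ℕ) :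
    mul (Finsupp.single 1 1) f (k + 1) = σ (f k) + D (f (k + 1)) := by
  induction f using Finsupp.induction_linear with
  | zero => simp [H.mul_zero]
  | add f g hf hg =>
    rw [H.mul_add, Finsupp.add_apply, hf, hg]
    simp only [Finsupp.add_apply, map_add]
    abel
  | single m a =>
    rw [H.d_mul_single]
    simp only [Finsupp.add_apply, Finsupp.single_apply, add_left_inj]
    by_cases h : m = k <;> by_cases h' : m = k + 1 <;> simp [h, h']

lemma comm_mul (H : IsOreMul q σ D mul) {f g h : ℕ →₀ R[X]} (hg : mul f g = mul g f)
    (hh : mul f h = mul h f) : mul f (mul g h) = mul (mul g h) f := by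
  rw [← H.assoc, hg, H.assoc, hh, H.assoc]

lemma comm_coe_of_comm_X (H : IsOreMul q σ D mul) {f : ℕ →₀ R[X]}
    (hX : mul f (Finsupp.single 0 X) = mul (Finsupp.single 0 X) f) (a : R[X]) :
    mul f (Finsupp.single 0 a) = mul (Finsupp.single 0 a) f := by
  induction a using Polynomial.induction_on with
  | C c => rw [H.mul_C, H.coe_mul]
  | add a b ha hb => rw [Finsupp.single_add, H.mul_add, H.add_mul, ha, hb]
  | monomial n c ih =>
    have h := H.comm_mul ih hX
    rwa [H.coe_mul (C c * X ^ n) (Finsupp.single 0 X), Finsupp.smul_single, smul_eq_mul, mul_assoc,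
      ← pow_succ] at h

lemma comm_of_comm_generators (H : IsOreMul q σ D mul) {f : ℕ →₀ R[X]}
    (ha : ∀ a, mul f (Finsupp.single 0 a) = mul (Finsupp.single 0 a) f)
    (hd : mul f (Finsupp.single 1 1) = mul (Finsupp.single 1 1) f) (g : ℕ →₀ R[X]) :
    mul f g = mul g f := by
  have hk : ∀ k, mul f (Finsupp.single k 1) = mul (Finsupp.single k 1) f := by
    intro k
    induction k with
    | zero => exact ha 1
    | succ k ih => rw [← H.single_mul_single]; exact H.comm_mul ih hd
  induction g using Finsupp.induction_linear with
  | zero => rw [H.mul_zero, H.zero_mul]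
  | add g h hg hh => rw [H.mul_add, H.add_mul, hg, hh]
  | single m a =>
    have h := H.comm_mul (ha a) (hk m)
    rwa [H.coe_mul a (Finsupp.single m 1), Finsupp.smul_single, smul_eq_mul, mul_one] at h

theorem centralizer (H : IsOreMul q σ D mul) (hpq : qInt q p = 0)
    (hunit : ∀ m, ¬ p ∣ m → IsUnit (qInt q m)) (f : ℕ →₀ R[X]) :
    (∀ a, mul f (Finsupp.single 0 a) = mul (Finsupp.single 0 a) f) ↔ ∀ k, ¬ p ∣ k → f k = 0 := by
  constructor
  · intro h k
    have hrec : ∀ k, C (q ^ k) * X * f k + C (qInt q (k + 1)) * f (k + 1) = X * f k := by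
      intro k
      rw [← H.mul_X_apply, h X, H.coe_mul, Finsupp.smul_apply, smul_eq_mul]
    induction k with
    | zero => intro h0; exact absurd (dvd_zero p) h0
    | succ k ih =>
      intro hk
      have h1 := hrec k
      have h2 : C (qInt q (k + 1)) * f (k + 1) = 0 := by
        by_cases hpk : p ∣ k
        · rw [q_pow_eq_one_of_dvd hpq hpk] at h1
          simpa using h1
        · simpa [ih hpk] using h1
      exact ((hunit _ hk).map C).mul_right_eq_zero.mp h2
  · intro h
    refine H.comm_coe_of_comm_X ?_
    ext1 k
    rw [H.mul_X_apply, H.coe_mul, Finsupp.smul_apply, smul_eq_mul]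
    have h1 : C (qInt q (k + 1)) * f (k + 1) = 0 := by
      by_cases hpk : p ∣ k + 1
      · simp [qInt_eq_zero_of_dvd hpq hpk]
      · simp [h _ hpk]
    rw [h1, add_zero]
    by_cases hpk : p ∣ k
    · simp [q_pow_eq_one_of_dvd hpq hpk]
    · simp [h k hpk]

/-- For `f` supported on multiples of `p`, commuting with `∂` means having all coefficients in
`R[x^p]`. -/
theorem comm_d_iff (H : IsOreMul q σ D mul) (hp : p.Prime) (hpq : qInt q p = 0)
    (hunit : ∀ m, ¬ p ∣ m → IsUnit (qInt q m)) {f : ℕ →₀ R[X]} (hf : ∀ k, ¬ p ∣ k → f k = 0) :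
    mul f (Finsupp.single 1 1) = mul (Finsupp.single 1 1) f ↔
      ∀ k, f k ∈ Algebra.adjoin R {(X : R[X]) ^ p} := by
  constructor
  · intro h k
    rw [mem_adjoin_X_pow_iff hp.pos]
    intro n hn
    have hDk : D (f k) = 0 := by
      rcases k with _ | k
      · rw [← H.d_mul_apply_zero, ← h, H.mul_d_apply_zero]
      · by_cases hk : p ∣ k + 1
        · have hk' : ¬ p ∣ k := fun h' => hp.one_lt.ne' (Nat.dvd_one.mp ((Nat.dvd_add_right h').mp hk))
          have h1 := H.mul_d_apply_succ f k
          rw [h, H.d_mul_apply_succ, hf k hk'] at h1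
          simpa using h1
        · rw [hf _ hk, map_zero]
    rcases n with _ | n
    · exact absurd (dvd_zero p) hn
    · have h1 := coeff_D H.D_X_pow (f k) n
      rw [hDk, coeff_zero] at h1
      exact (hunit _ hn).mul_right_eq_zero.mp h1.symm
  · intro h
    simp only [mem_adjoin_X_pow_iff hp.pos] at h
    have hDf : ∀ k, D (f k) = 0 := by
      intro k
      ext n
      rw [coeff_D H.D_X_pow, coeff_zero]
      by_cases hn : p ∣ n + 1
      · simp [qInt_eq_zero_of_dvd hpq hn]
      · simp [h k _ hn]
    have hσf : ∀ k, σ (f k) = f k := by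
      intro k
      ext n
      rw [coeff_sigma H.sigma_X]
      by_cases hn : p ∣ n
      · simp [q_pow_eq_one_of_dvd hpq hn]
      · simp [h k _ hn]
    ext1 k
    rcases k with _ | k
    · rw [H.mul_d_apply_zero, H.d_mul_apply_zero, hDf]
    · rw [H.mul_d_apply_succ, H.d_mul_apply_succ, hDf, hσf, add_zero]

end IsOreMul

/-- centralizer of `A` and center of the ring of `q`-twisted differential
operators: let `p` be a prime, `R` a nontrivial commutative ring, `q ∈ R` with
`(p)_q = 0` and `R` `q`-divisible; `A = R[x]`, `σ(x) = qx`, `∂_σ(x^n) = (n)_q x^{n−1}`,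
and `D = D_{A,σ}` the Ore extension (axiomatized below by its multiplication `mul` on the
free left `A`-module `ℕ →₀ A`, `Finsupp.single k 1` representing `∂^k`).  Then:
(a) `Σ_k a_k∂^k` commutes with every element of `A` iff `a_k = 0` whenever `p ∤ k`;
(b) `Σ_k a_k∂^k` is central iff moreover every `a_k` lies in the subring `R[x^p]`. -/
theorem center_of_q_twisted_differential_operators
    (p : ℕ) (hp : p.Prime)
    (R : Type*) [CommRing R] [Nontrivial R] (q : R)
    (hpq : qInt q p = 0)
    (hdiv : ∀ m : ℕ, 1 ≤ m → qInt q m ≠ 0 → IsUnit (qInt q m))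
    (σ : Polynomial R →ₐ[R] Polynomial R)
    (hσ : σ Polynomial.X = Polynomial.C q * Polynomial.X)
    (D : Polynomial R →ₗ[R] Polynomial R)
    (hD : ∀ n : ℕ, D (Polynomial.X ^ n) = qInt q n • Polynomial.X ^ (n - 1))
    (mul : (ℕ →₀ Polynomial R) → (ℕ →₀ Polynomial R) → (ℕ →₀ Polynomial R))
    (hadd₁ : ∀ f g h : ℕ →₀ Polynomial R, mul (f + g) h = mul f h + mul g h)
    (hadd₂ : ∀ f g h : ℕ →₀ Polynomial R, mul f (g + h) = mul f g + mul f h)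
    (hassoc : ∀ f g h : ℕ →₀ Polynomial R, mul (mul f g) h = mul f (mul g h))
    (hone₁ : ∀ f : ℕ →₀ Polynomial R, mul (Finsupp.single 0 1) f = f)
    (hone₂ : ∀ f : ℕ →₀ Polynomial R, mul f (Finsupp.single 0 1) = f)
    (hA : ∀ a b : Polynomial R,
      mul (Finsupp.single 0 a) (Finsupp.single 0 b) = Finsupp.single 0 (a * b))
    (hsmul : ∀ (a : Polynomial R) (f g : ℕ →₀ Polynomial R), mul (a • f) g = a • mul f g)
    (hpow : ∀ k l : ℕ, mul (Finsupp.single k 1) (Finsupp.single l 1) =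
      Finsupp.single (k + l) 1)
    (hcomm : ∀ a : Polynomial R, mul (Finsupp.single 1 1) (Finsupp.single 0 a) =
      Finsupp.single 1 (σ a) + Finsupp.single 0 (D a)) :
    -- (a) the centralizer of `A` is the free `A`-module with basis `(∂^{pk})_{k∈ℕ}`
    (∀ f : ℕ →₀ Polynomial R,
      (∀ a : Polynomial R, mul f (Finsupp.single 0 a) = mul (Finsupp.single 0 a) f) ↔
      (∀ k : ℕ, ¬ p ∣ k → f k = 0)) ∧
    -- (b) the center of `D` is `R[x^p][∂^p]`
    (∀ f : ℕ →₀ Polynomial R,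
      (∀ g : ℕ →₀ Polynomial R, mul f g = mul g f) ↔
      ((∀ k : ℕ, ¬ p ∣ k → f k = 0) ∧
        ∀ k : ℕ, f k ∈ Algebra.adjoin R {(Polynomial.X : Polynomial R) ^ p})) := by
  have H : IsOreMul q σ D mul :=
    ⟨hσ, hD, hadd₁, hadd₂, hassoc, hone₁, hsmul, hpow, hcomm⟩
  have hunit : ∀ m, ¬ p ∣ m → IsUnit (qInt q m) := fun m hm =>
    hdiv m (Nat.pos_of_ne_zero fun h0 => hm (h0 ▸ dvd_zero p)) (qInt_ne_zero hp hpq hm)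
  refine ⟨H.centralizer hpq hunit, fun f => ⟨fun h => ?_, fun h => ?_⟩⟩
  · have hf := (H.centralizer hpq hunit f).mp fun a => h _
    exact ⟨hf, (H.comm_d_iff hp hpq hunit hf).mp (h _)⟩
  · exact H.comm_of_comm_generators ((H.centralizer hpq hunit f).mpr h.1)
      ((H.comm_d_iff hp hpq hunit h.1).mpr h.2)
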